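/- Fix an integer n ≥ 1 and a real c > 0. Let L ⊆ ℝ be an open interval and f : L → (−∞, 0) a C² solution of the type III Grim Reaper ODE. If f'(s₀) = 0 for some s₀ ∈ L, then s₀ is a strict absolute minimum of f: for every s ∈ L with s ≠ s₀ one has f(s) > f(s₀). In particular, f has at most one critical point. -/

import Mathlib

open Real Set Filter Topology

/-- The type III warping function `b_III(y) = -n·c·tanh(c·y)`. -/
noncomputable def bIII (n : ℕ) (c : ℝ) : ℝ → ℝ := fun y => -((n : ℝ) * c * Real.tanh (c * y))

/-- `f` is a `C²` solution of the type III Grim Reaper ODE on `L`, with values in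
`I_III = (-∞, 0)`. -/
def IsGrimReaperSolIII (n : ℕ) (c : ℝ) (f : ℝ → ℝ) (L : Set ℝ) : Prop :=
  (∀ s ∈ L, f s ∈ Set.Iio (0 : ℝ)) ∧
  ContDiffOn ℝ 2 f L ∧
  ∀ s ∈ L,
    deriv (deriv f) s =
      (1 - (deriv f s) ^ 2 / (bIII n c (f s)) ^ 2) * bIII n c (f s) * (c ^ 2 * (n : ℝ) ^ 2)
        + (deriv (bIII n c) (f s) / bIII n c (f s)) * (deriv f s) ^ 2

lemma strict_local_min_aux (f : ℝ → ℝ) (x : ℝ) (hd : ∀ᶠ y in 𝓝 x, DifferentiableAt ℝ f y)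
    (h1 : deriv f x = 0) (h2 : 0 < deriv (deriv f) x) :
    ∀ᶠ y in 𝓝 x, y ≠ x → f x < f y := by
  set k := deriv (deriv f) x / 4 with hk
  have hkpos : 0 < k := by positivity
  have hq : ∀ y, HasDerivAt (fun y : ℝ => k * (y - x) ^ 2) (2 * k * (y - x)) y := by
    intro y
    have := (((hasDerivAt_id y).sub_const x).pow 2).const_mul k
    refine this.congr_deriv ?_
    simp
    ring
  have hg : deriv (fun y => f y - k * (y - x) ^ 2) =ᶠ[𝓝 x]
      fun y => deriv f y - 2 * k * (y - x) := by
    filter_upwards [hd] with y hy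
    exact (hy.hasDerivAt.sub (hq y)).deriv
  have hdd : DifferentiableAt ℝ (deriv f) x := differentiableAt_of_deriv_ne_zero h2.ne'
  have hlin : HasDerivAt (fun y : ℝ => 2 * k * (y - x)) (2 * k) x := by
    simpa using ((hasDerivAt_id x).sub_const x).const_mul (2 * k)
  have hmin : IsLocalMin (fun y => f y - k * (y - x) ^ 2) x := by
    apply isLocalMin_of_deriv_deriv_pos
    · rw [hg.deriv_eq]
      have := (hdd.hasDerivAt.sub hlin).deriv
      have h3 : deriv (fun y => deriv f y - 2 * k * (y - x)) x = deriv (deriv f) x - 2 * k := this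
      rw [h3]
      linarith
    · rw [hg.eq_of_nhds]
      simp [h1]
    · exact (hd.self_of_nhds.hasDerivAt.sub (hq x)).continuousAt
  filter_upwards [hmin] with y hy hne
  have h4 : 0 < (y - x) ^ 2 := by
    have := sub_ne_zero.mpr hne
    positivity
  have h5 : f x - k * (x - x) ^ 2 ≤ f y - k * (y - x) ^ 2 := hy
  have := mul_pos hkpos h4
  simp at h5
  linarith

lemma bIII_pos_aux (n : ℕ) (hn : 1 ≤ n) (c : ℝ) (hc : 0 < c) (y : ℝ) (hy : y < 0) :
    0 < bIII n c y := by
  have h1 : Real.tanh (c * y) < 0 := by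
    rw [Real.tanh_eq_sinh_div_cosh]
    exact div_neg_of_neg_of_pos (Real.sinh_neg_iff.mpr (mul_neg_of_pos_of_neg hc hy))
      (Real.cosh_pos _)
  have h2 : (0 : ℝ) < n := by exact_mod_cast hn
  have := mul_neg_of_pos_of_neg (mul_pos h2 hc) h1
  unfold bIII
  linarith

/-- A critical point of a solution of the type III Grim Reaper ODE on an
open interval is a strict absolute minimum. -/
theorem grimReaperIII_critical_point_is_strict_min (n : ℕ) (hn : 1 ≤ n) (c : ℝ) (hc : 0 < c)
    (L : Set ℝ) (hLopen : IsOpen L) (hLconn : L.OrdConnected)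
    (f : ℝ → ℝ) (hf : IsGrimReaperSolIII n c f L)
    (s₀ : ℝ) (hs₀ : s₀ ∈ L) (hcrit : deriv f s₀ = 0) :
    ∀ s ∈ L, s ≠ s₀ → f s > f s₀ := by
  obtain ⟨hneg, hC, hode⟩ := hf
  have hn' : (0 : ℝ) < n := by exact_mod_cast hn
  have hdiff : ∀ x ∈ L, DifferentiableAt ℝ f x := fun x hx =>
    (hC.differentiableOn (by norm_num)).differentiableAt (hLopen.mem_nhds hx)
  have key : ∀ x ∈ L, deriv f x = 0 → ∀ᶠ y in 𝓝 x, y ≠ x → f x < f y := by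
    intro x hx h0
    apply strict_local_min_aux f x _ h0
    · rw [hode x hx, h0]
      have := bIII_pos_aux n hn c hc (f x) (hneg x hx)
      simp
      positivity
    · filter_upwards [hLopen.mem_nhds hx] with y hy using hdiff y hy
  intro s hs hne
  have hsub : uIcc s₀ s ⊆ L := hLconn.uIcc_subset hs₀ hs
  obtain ⟨m, hm, hmax⟩ := isCompact_uIcc.exists_isMaxOn (nonempty_uIcc (a := s₀) (b := s))
    (fun x hx => (hdiff x (hsub hx)).continuousAt.continuousWithinAt)
  have hmax' : ∀ y ∈ uIcc s₀ s, f y ≤ f m := hmax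
  -- the maximum is at `s` : any other point is a strict local minimum seen from the segment
  have hms : m = s := by
    by_contra hms
    have hcr : deriv f m = 0 := by
      by_cases hm0 : m = s₀
      · rw [hm0, hcrit]
      · have : uIcc s₀ s ∈ 𝓝 m := by
          rcases le_total s₀ s with h | h
          · rw [uIcc_of_le h] at hm ⊢
            exact Icc_mem_nhds (lt_of_le_of_ne hm.1 (Ne.symm hm0)) (lt_of_le_of_ne hm.2 hms)
          · rw [uIcc_of_ge h] at hm ⊢
            exact Icc_mem_nhds (lt_of_le_of_ne hm.1 (Ne.symm hms)) (lt_of_le_of_ne hm.2 hm0)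
        exact (hmax.isLocalMax this).deriv_eq_zero
    have hev := key m (hsub hm) hcr
    have hlim : Tendsto (fun t : ℝ => m + t * (s - m)) (𝓝[>] 0) (𝓝 m) := by
      have : Continuous (fun t : ℝ => m + t * (s - m)) := by fun_prop
      have h := this.tendsto 0
      simp only [zero_mul, add_zero] at h
      exact h.mono_left nhdsWithin_le_nhds
    obtain ⟨t, ht1, ht2⟩ := ((hlim.eventually hev).and
      (Ioo_mem_nhdsGT (show (0 : ℝ) < 1 by norm_num))).exists
    have hsm : s - m ≠ 0 := sub_ne_zero.mpr (Ne.symm hms)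
    have hlt := ht1 (by simpa using ⟨ht2.1.ne', hsm⟩)
    have hmem : m + t * (s - m) ∈ uIcc s₀ s := by
      have := (convex_uIcc s₀ s).add_smul_sub_mem hm right_mem_uIcc ⟨ht2.1.le, ht2.2.le⟩
      simpa using this
    exact absurd (hmax' _ hmem) (not_le.mpr hlt)
  subst hms
  have h0 : f s₀ ≤ f m := hmax' _ left_mem_uIcc
  rcases h0.lt_or_eq with h | h
  · exact h
  · exfalso
    have hev := key s₀ hs₀ hcrit
    have hlim : Tendsto (fun t : ℝ => s₀ + t * (m - s₀)) (𝓝[>] 0) (𝓝 s₀) := by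
      have : Continuous (fun t : ℝ => s₀ + t * (m - s₀)) := by fun_prop
      have h := this.tendsto 0
      simp only [zero_mul, add_zero] at h
      exact h.mono_left nhdsWithin_le_nhds
    obtain ⟨t, ht1, ht2⟩ := ((hlim.eventually hev).and
      (Ioo_mem_nhdsGT (show (0 : ℝ) < 1 by norm_num))).exists
    have hsm : m - s₀ ≠ 0 := sub_ne_zero.mpr hne
    have hlt := ht1 (by simpa using ⟨ht2.1.ne', hsm⟩)
    have hmem : s₀ + t * (m - s₀) ∈ uIcc s₀ m := by
      have := (convex_uIcc s₀ m).add_smul_sub_mem left_mem_uIcc right_mem_uIcc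
        ⟨ht2.1.le, ht2.2.le⟩
      simpa using this
    have := hmax' _ hmem
    linarith
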